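/- Fix μ>0 and let U ⊆ ℝ⁴ be open. If φ:U→ℂ is smooth and satisfies □̃_μφ = 0 on U, then the function X ↦ (1+μ²N(X))^{1/2}·(d̃eg φ)(X) also satisfies □̃_μ((1+μ²N(X))^{1/2}·d̃eg φ) = 0 on U. -/

import Mathlib

noncomputable section

/-- `N(X) = (x⁰)² + (x¹)² + (x²)² + (x³)²` for `X ∈ ℝ⁴`. -/
def Nq (X : Fin 4 → ℝ) : ℝ := ∑ i, X i ^ 2

/-- The `i`-th standard basis vector of `ℝ⁴`. -/
def e4 (i : Fin 4) : Fin 4 → ℝ := Pi.single i 1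

/-- The partial derivative `∂f/∂xⁱ` of a `ℂ`-valued function on `ℝ⁴`. -/
def pd (i : Fin 4) (f : (Fin 4 → ℝ) → ℂ) (X : Fin 4 → ℝ) : ℂ := fderiv ℝ f X (e4 i)

/-- The Laplacian `□f = Σᵢ ∂²f/∂(xⁱ)²`. -/
def lap (f : (Fin 4 → ℝ) → ℂ) (X : Fin 4 → ℝ) : ℂ := ∑ i, pd i (pd i f) X

/-- The degree operator `deg f = Σᵢ xⁱ ∂f/∂xⁱ`. -/
def degOp (f : (Fin 4 → ℝ) → ℂ) (X : Fin 4 → ℝ) : ℂ := ∑ i, (X i : ℂ) * pd i f X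

/-- `d̃eg f = f + deg f`. -/
def tdeg (f : (Fin 4 → ℝ) → ℂ) (X : Fin 4 → ℝ) : ℂ := f X + degOp f X

/-- The conformal Laplacian `□̃_μ f = □f + μ²(deg(deg f) + 3·deg f + 2f)`. -/
def boxTilde (μ : ℝ) (f : (Fin 4 → ℝ) → ℂ) (X : Fin 4 → ℝ) : ℂ :=
  lap f X + (μ ^ 2 : ℝ) * (degOp (degOp f) X + 3 * degOp f X + 2 * f X)

/-!
Write `E` for `deg`, so that `□̃_μ = □ + μ²(E + 1)(E + 2)`, and `ρ = (1 + μ²N)^{1/2}`. From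
`∂ᵢρ = μ²xⁱρ⁻¹` one gets `Eρ = ρ - ρ⁻¹`, `E²ρ = ρ - ρ⁻³` and `□ρ = μ²(3ρ⁻¹ + ρ⁻³)`. In the
product rule for `□̃_μ(ρ g)` all negative powers of `ρ` cancel, leaving
`□̃_μ(ρ g) = ρ (□ + μ²(E + 2)(E + 3)) g`. For `g = (E + 1)φ`, the commutation rule
`□ E = (E + 2) □` turns the right-hand side into `ρ (E + 3) □̃_μ φ`.
-/

open Filter Topology

section Calculus

variable {f g : (Fin 4 → ℝ) → ℂ} {X : Fin 4 → ℝ}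

lemma degOp_eq_fderiv (f : (Fin 4 → ℝ) → ℂ) (X : Fin 4 → ℝ) : degOp f X = fderiv ℝ f X X := by
  conv_rhs => arg 2; rw [pi_eq_sum_univ' X]
  simp [degOp, pd, e4]

lemma pd_eventuallyEq (h : f =ᶠ[𝓝 X] g) (i : Fin 4) : pd i f =ᶠ[𝓝 X] pd i g := by
  filter_upwards [h.fderiv (𝕜 := ℝ)] with Y hY
  rw [pd, pd, hY]

lemma degOp_eventuallyEq (h : f =ᶠ[𝓝 X] g) : degOp f =ᶠ[𝓝 X] degOp g := by
  filter_upwards [h.fderiv (𝕜 := ℝ)] with Y hY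
  rw [degOp_eq_fderiv, degOp_eq_fderiv, hY]

lemma pd_add (hf : DifferentiableAt ℝ f X) (hg : DifferentiableAt ℝ g X) (i : Fin 4) :
    pd i (f + g) X = pd i f X + pd i g X := by
  simp [pd, fderiv_add hf hg]

lemma degOp_add (hf : DifferentiableAt ℝ f X) (hg : DifferentiableAt ℝ g X) :
    degOp (f + g) X = degOp f X + degOp g X := by
  simp [degOp_eq_fderiv, fderiv_add hf hg]

lemma degOp_sub (hf : DifferentiableAt ℝ f X) (hg : DifferentiableAt ℝ g X) :
    degOp (f - g) X = degOp f X - degOp g X := by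
  simp [degOp_eq_fderiv, fderiv_sub hf hg]

lemma degOp_sum {ι : Type*} {s : Finset ι} {F : ι → (Fin 4 → ℝ) → ℂ}
    (hF : ∀ i ∈ s, DifferentiableAt ℝ (F i) X) :
    degOp (∑ i ∈ s, F i) X = ∑ i ∈ s, degOp (F i) X := by
  simp [degOp_eq_fderiv, fderiv_sum hF]

lemma pd_const_smul (hf : DifferentiableAt ℝ f X) (c : ℂ) (i : Fin 4) :
    pd i (c • f) X = c * pd i f X := by
  simp [pd, fderiv_const_smul hf]

lemma degOp_const_smul (hf : DifferentiableAt ℝ f X) (c : ℂ) :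
    degOp (c • f) X = c * degOp f X := by
  simp [degOp_eq_fderiv, fderiv_const_smul hf]

lemma pd_mul (hf : DifferentiableAt ℝ f X) (hg : DifferentiableAt ℝ g X) (i : Fin 4) :
    pd i (f * g) X = f X * pd i g X + g X * pd i f X := by
  simp [pd, fderiv_mul hf hg]

lemma degOp_mul (hf : DifferentiableAt ℝ f X) (hg : DifferentiableAt ℝ g X) :
    degOp (f * g) X = f X * degOp g X + g X * degOp f X := by
  simp [degOp_eq_fderiv, fderiv_mul hf hg]

lemma pd_inv (hf : DifferentiableAt ℝ f X) (hX : f X ≠ 0) (i : Fin 4) :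
    pd i f⁻¹ X = -(f X)⁻¹ ^ 2 * pd i f X := by
  have hinv : HasFDerivAt f⁻¹ _ X := (hasFDerivAt_inv' (𝕜 := ℝ) hX).comp X hf.hasFDerivAt
  simp only [pd, hinv.fderiv, ContinuousLinearMap.comp_apply, neg_apply,
    ContinuousLinearMap.mulLeftRight_apply]
  ring

lemma degOp_inv (hf : DifferentiableAt ℝ f X) (hX : f X ≠ 0) :
    degOp f⁻¹ X = -(f X)⁻¹ ^ 2 * degOp f X := by
  simp only [degOp, pd_inv hf hX, Finset.mul_sum]
  exact Finset.sum_congr rfl fun i _ ↦ by ring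

lemma contDiffAt_pd {m n : WithTop ℕ∞} (hf : ContDiffAt ℝ n f X) (hmn : m + 1 ≤ n) (i : Fin 4) :
    ContDiffAt ℝ m (pd i f) X :=
  (hf.fderiv_right hmn).clm_apply contDiffAt_const

lemma contDiffAt_degOp {m n : WithTop ℕ∞} (hf : ContDiffAt ℝ n f X) (hmn : m + 1 ≤ n) :
    ContDiffAt ℝ m (degOp f) X := by
  rw [funext (degOp_eq_fderiv f)]
  exact (hf.fderiv_right hmn).clm_apply contDiffAt_id

lemma lap_add (hf : ContDiffAt ℝ 2 f X) (hg : ContDiffAt ℝ 2 g X) :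
    lap (f + g) X = lap f X + lap g X := by
  simp only [lap, ← Finset.sum_add_distrib]
  refine Finset.sum_congr rfl fun i _ ↦ ?_
  have hpd : pd i (f + g) =ᶠ[𝓝 X] pd i f + pd i g := by
    filter_upwards [hf.eventually (by simp), hg.eventually (by simp)] with Y hfY hgY
    exact pd_add (hfY.differentiableAt (by simp)) (hgY.differentiableAt (by simp)) i
  rw [(pd_eventuallyEq hpd i).eq_of_nhds]
  exact pd_add ((contDiffAt_pd hf one_add_one_eq_two.le i).differentiableAt (by simp))
    ((contDiffAt_pd hg one_add_one_eq_two.le i).differentiableAt (by simp)) i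

lemma pd_pd_mul (hf : ContDiffAt ℝ 2 f X) (hg : ContDiffAt ℝ 2 g X) (i : Fin 4) :
    pd i (pd i (f * g)) X =
      f X * pd i (pd i g) X + 2 * (pd i f X * pd i g X) + g X * pd i (pd i f) X := by
  have hpd : pd i (f * g) =ᶠ[𝓝 X] f * pd i g + g * pd i f := by
    filter_upwards [hf.eventually (by simp), hg.eventually (by simp)] with Y hfY hgY
    exact pd_mul (hfY.differentiableAt (by simp)) (hgY.differentiableAt (by simp)) i
  have df : DifferentiableAt ℝ f X := hf.differentiableAt (by simp)
  have dg : DifferentiableAt ℝ g X := hg.differentiableAt (by simp)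
  have dpf := (contDiffAt_pd hf one_add_one_eq_two.le i).differentiableAt (by simp)
  have dpg := (contDiffAt_pd hg one_add_one_eq_two.le i).differentiableAt (by simp)
  rw [(pd_eventuallyEq hpd i).eq_of_nhds, pd_add (df.mul dpg) (dg.mul dpf), pd_mul df dpg,
    pd_mul dg dpf]
  ring

lemma lap_mul (hf : ContDiffAt ℝ 2 f X) (hg : ContDiffAt ℝ 2 g X) :
    lap (f * g) X = f X * lap g X + 2 * ∑ i, pd i f X * pd i g X + g X * lap f X := by
  simp only [lap, pd_pd_mul hf hg, Finset.sum_add_distrib, Finset.mul_sum]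

lemma degOp_degOp_mul (hf : ContDiffAt ℝ 2 f X) (hg : ContDiffAt ℝ 2 g X) :
    degOp (degOp (f * g)) X =
      f X * degOp (degOp g) X + 2 * (degOp f X * degOp g X) + g X * degOp (degOp f) X := by
  have hdeg : degOp (f * g) =ᶠ[𝓝 X] f * degOp g + g * degOp f := by
    filter_upwards [hf.eventually (by simp), hg.eventually (by simp)] with Y hfY hgY
    exact degOp_mul (hfY.differentiableAt (by simp)) (hgY.differentiableAt (by simp))
  have df : DifferentiableAt ℝ f X := hf.differentiableAt (by simp)
  have dg : DifferentiableAt ℝ g X := hg.differentiableAt (by simp)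
  have ddf := (contDiffAt_degOp hf one_add_one_eq_two.le).differentiableAt (by simp)
  have ddg := (contDiffAt_degOp hg one_add_one_eq_two.le).differentiableAt (by simp)
  rw [(degOp_eventuallyEq hdeg).eq_of_nhds, degOp_add (df.mul ddg) (dg.mul ddf), degOp_mul df ddg,
    degOp_mul dg ddf]
  ring

lemma pd_degOp (hf : ContDiffAt ℝ 2 f X) (i : Fin 4) :
    pd i (degOp f) X = pd i f X + degOp (pd i f) X := by
  have hdf : DifferentiableAt ℝ (fderiv ℝ f) X :=
    (hf.fderiv_right one_add_one_eq_two.le).differentiableAt (by simp)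
  have hsymm : IsSymmSndFDerivAt ℝ f X := hf.isSymmSndFDerivAt (by simp)
  have hleft : pd i (degOp f) X = fderiv ℝ f X (e4 i) + fderiv ℝ (fderiv ℝ f) X (e4 i) X := by
    rw [pd, funext (degOp_eq_fderiv f), fderiv_clm_apply hdf differentiableAt_fun_id]
    simp
  have hright : degOp (pd i f) X = fderiv ℝ (fderiv ℝ f) X X (e4 i) := by
    rw [degOp_eq_fderiv]
    unfold pd
    rw [fderiv_clm_apply hdf (differentiableAt_const _)]
    simp
  rw [hleft, hright, hsymm.eq, pd]

lemma pd_pd_degOp (hf : ContDiffAt ℝ 3 f X) (i : Fin 4) :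
    pd i (pd i (degOp f)) X = degOp (pd i (pd i f)) X + 2 * pd i (pd i f) X := by
  have hpd : ContDiffAt ℝ 2 (pd i f) X := contDiffAt_pd hf two_add_one_eq_three.le i
  have hcomm : pd i (degOp f) =ᶠ[𝓝 X] pd i f + degOp (pd i f) := by
    filter_upwards [hf.eventually (by simp)] with Y hY
    exact pd_degOp (hY.of_le (by norm_num)) i
  rw [(pd_eventuallyEq hcomm i).eq_of_nhds,
    pd_add (hpd.differentiableAt (by simp))
      ((contDiffAt_degOp hpd one_add_one_eq_two.le).differentiableAt (by simp)),
    pd_degOp hpd]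
  ring

lemma lap_eq_sum (f : (Fin 4 → ℝ) → ℂ) : lap f = ∑ i, pd i (pd i f) := by
  ext X
  simp [lap]

lemma differentiableAt_pd_pd (hf : ContDiffAt ℝ 3 f X) (i j : Fin 4) :
    DifferentiableAt ℝ (pd i (pd j f)) X :=
  (contDiffAt_pd (contDiffAt_pd hf two_add_one_eq_three.le j)
    one_add_one_eq_two.le i).differentiableAt (by simp)

lemma differentiableAt_lap (hf : ContDiffAt ℝ 3 f X) : DifferentiableAt ℝ (lap f) X := by
  rw [lap_eq_sum]
  exact DifferentiableAt.sum fun i _ ↦ differentiableAt_pd_pd hf i i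

lemma lap_degOp (hf : ContDiffAt ℝ 3 f X) :
    lap (degOp f) X = degOp (lap f) X + 2 * lap f X := by
  rw [lap_eq_sum f, degOp_sum fun i _ ↦ differentiableAt_pd_pd hf i i]
  simp only [lap, pd_pd_degOp hf, Finset.sum_add_distrib, Finset.mul_sum, Finset.sum_apply]

end Calculus

section ConformalFactor

/-- The function `ρ = (1 + μ²N)^{1/2}`, regarded as `ℂ`-valued so that `pd`, `lap` and `degOp`
apply to it. -/
def conformalFactor (μ : ℝ) (X : Fin 4 → ℝ) : ℂ := (√(1 + μ ^ 2 * Nq X) : ℝ)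

variable (μ : ℝ) (X : Fin 4 → ℝ)

lemma one_add_sq_mul_Nq_pos : 0 < 1 + μ ^ 2 * Nq X := by
  have hN : 0 ≤ Nq X := Finset.sum_nonneg fun i _ ↦ sq_nonneg (X i)
  positivity

lemma conformalFactor_ne_zero : conformalFactor μ X ≠ 0 :=
  Complex.ofReal_ne_zero.2 (Real.sqrt_pos.2 (one_add_sq_mul_Nq_pos μ X)).ne'

lemma conformalFactor_sq : conformalFactor μ X ^ 2 = 1 + (μ : ℂ) ^ 2 * Nq X := by
  rw [conformalFactor, ← Complex.ofReal_pow, Real.sq_sqrt (one_add_sq_mul_Nq_pos μ X).le]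
  push_cast
  rfl

lemma contDiff_conformalFactor {n : WithTop ℕ∞} : ContDiff ℝ n (conformalFactor μ) := by
  have hsq : ContDiff ℝ n fun Y : Fin 4 → ℝ ↦ 1 + μ ^ 2 * Nq Y := by
    unfold Nq
    fun_prop
  exact Complex.ofRealCLM.contDiff.comp (hsq.sqrt fun Y ↦ (one_add_sq_mul_Nq_pos μ Y).ne')

lemma differentiable_conformalFactor : Differentiable ℝ (conformalFactor μ) :=
  (contDiff_conformalFactor μ).differentiable one_ne_zero

lemma differentiableAt_Nq : DifferentiableAt ℝ Nq X := by
  unfold Nq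
  fun_prop

lemma fderiv_Nq_e4 (i : Fin 4) : fderiv ℝ Nq X (e4 i) = 2 * X i := by
  have hN : HasFDerivAt Nq _ X :=
    HasFDerivAt.fun_sum fun j _ ↦ (hasFDerivAt_apply (𝕜 := ℝ) j X).pow 2
  simp [hN.fderiv, e4, Pi.single_apply]

lemma pd_conformalFactor (i : Fin 4) :
    pd i (conformalFactor μ) X = (μ : ℂ) ^ 2 * X i * (conformalFactor μ X)⁻¹ := by
  have hρ : HasFDerivAt (conformalFactor μ) _ X :=
    Complex.ofRealCLM.hasFDerivAt.comp X
      ((((differentiableAt_Nq X).hasFDerivAt.const_mul (μ ^ 2)).const_add 1).sqrt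
        (one_add_sq_mul_Nq_pos μ X).ne')
  simp only [pd, hρ.fderiv, ContinuousLinearMap.comp_apply, smul_apply, fderiv_Nq_e4,
    smul_eq_mul, Complex.ofRealCLM_apply, conformalFactor]
  push_cast
  ring

lemma pd_coord (i j : Fin 4) : pd i (fun Y ↦ (Y j : ℂ)) X = e4 i j := by
  have hcoord : HasFDerivAt (fun Y : Fin 4 → ℝ ↦ (Y j : ℂ)) _ X :=
    Complex.ofRealCLM.hasFDerivAt.comp X (hasFDerivAt_apply j X)
  rw [pd, hcoord.fderiv]
  rfl

lemma degOp_conformalFactor :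
    degOp (conformalFactor μ) X = conformalFactor μ X - (conformalFactor μ X)⁻¹ := by
  have hsum : degOp (conformalFactor μ) X =
      (μ : ℂ) ^ 2 * Nq X * (conformalFactor μ X)⁻¹ := by
    simp only [degOp, pd_conformalFactor, Nq, Complex.ofReal_sum, Complex.ofReal_pow,
      Finset.mul_sum, Finset.sum_mul]
    exact Finset.sum_congr rfl fun i _ ↦ by ring
  have hρ := conformalFactor_ne_zero μ X
  rw [hsum]
  field_simp
  linear_combination -conformalFactor_sq μ X

lemma degOp_degOp_conformalFactor :
    degOp (degOp (conformalFactor μ)) X = conformalFactor μ X - (conformalFactor μ X)⁻¹ ^ 3 := by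
  have hρ := conformalFactor_ne_zero μ X
  have dρ := differentiable_conformalFactor μ X
  have hdeg : degOp (conformalFactor μ) = conformalFactor μ - (conformalFactor μ)⁻¹ :=
    funext (degOp_conformalFactor μ)
  rw [hdeg, degOp_sub dρ (dρ.inv hρ), degOp_inv dρ hρ, degOp_conformalFactor]
  field_simp
  ring

lemma pd_pd_conformalFactor (i : Fin 4) :
    pd i (pd i (conformalFactor μ)) X =
      (μ : ℂ) ^ 2 * ((conformalFactor μ X)⁻¹ -
        (μ : ℂ) ^ 2 * X i ^ 2 * (conformalFactor μ X)⁻¹ ^ 3) := by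
  have hρ := conformalFactor_ne_zero μ X
  have dρ := differentiable_conformalFactor μ X
  have dcoord : DifferentiableAt ℝ (fun Y : Fin 4 → ℝ ↦ (Y i : ℂ)) X := by fun_prop
  have hpd : pd i (conformalFactor μ) =
      ((μ : ℂ) ^ 2) • ((fun Y ↦ (Y i : ℂ)) * (conformalFactor μ)⁻¹) := by
    ext Y
    simp [pd_conformalFactor, mul_assoc]
  rw [hpd, pd_const_smul (dcoord.mul (dρ.inv hρ)), pd_mul dcoord (dρ.inv hρ), pd_inv dρ hρ,
    pd_coord, pd_conformalFactor, Pi.inv_apply, e4, Pi.single_eq_same, Complex.ofReal_one]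
  ring

lemma lap_conformalFactor :
    lap (conformalFactor μ) X =
      (μ : ℂ) ^ 2 * (3 * (conformalFactor μ X)⁻¹ + (conformalFactor μ X)⁻¹ ^ 3) := by
  have hsum : lap (conformalFactor μ) X = (μ : ℂ) ^ 2 * (4 * (conformalFactor μ X)⁻¹ -
      (μ : ℂ) ^ 2 * Nq X * (conformalFactor μ X)⁻¹ ^ 3) := by
    simp [lap, pd_pd_conformalFactor, Nq, Finset.sum_sub_distrib, ← Finset.mul_sum,
      ← Finset.sum_mul]
  have hρ := conformalFactor_ne_zero μ X
  rw [hsum]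
  field_simp
  linear_combination (μ : ℂ) ^ 2 * conformalFactor_sq μ X

lemma sum_pd_conformalFactor_mul_pd (g : (Fin 4 → ℝ) → ℂ) :
    ∑ i, pd i (conformalFactor μ) X * pd i g X =
      (μ : ℂ) ^ 2 * (conformalFactor μ X)⁻¹ * degOp g X := by
  simp only [pd_conformalFactor, degOp, Finset.mul_sum]
  exact Finset.sum_congr rfl fun i _ ↦ by ring

end ConformalFactor

section Intertwining

variable (μ : ℝ) {f g : (Fin 4 → ℝ) → ℂ} {X : Fin 4 → ℝ}

lemma boxTilde_conformalFactor_mul (hg : ContDiffAt ℝ 2 g X) :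
    boxTilde μ (conformalFactor μ * g) X = conformalFactor μ X *
      (lap g X + (μ : ℂ) ^ 2 * (degOp (degOp g) X + 5 * degOp g X + 6 * g X)) := by
  have hρ := conformalFactor_ne_zero μ X
  have cρ : ContDiffAt ℝ 2 (conformalFactor μ) X := (contDiff_conformalFactor μ).contDiffAt
  rw [boxTilde, lap_mul cρ hg, degOp_degOp_mul cρ hg,
    degOp_mul (differentiable_conformalFactor μ X) (hg.differentiableAt (by simp)),
    sum_pd_conformalFactor_mul_pd, lap_conformalFactor, degOp_degOp_conformalFactor,
    degOp_conformalFactor, Pi.mul_apply, Complex.ofReal_pow]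
  field_simp
  ring

lemma degOp_boxTilde (hf : ContDiffAt ℝ 3 f X) :
    degOp (boxTilde μ f) X = degOp (lap f) X + (μ : ℂ) ^ 2 *
      (degOp (degOp (degOp f)) X + 3 * degOp (degOp f) X + 2 * degOp f X) := by
  have hbox : boxTilde μ f = lap f + ((μ : ℂ) ^ 2) •
      (degOp (degOp f) + (3 : ℂ) • degOp f + (2 : ℂ) • f) := by
    ext Y
    simp [boxTilde, mul_add]
  have cE : ContDiffAt ℝ 2 (degOp f) X := contDiffAt_degOp hf two_add_one_eq_three.le
  have df : DifferentiableAt ℝ f X := hf.differentiableAt (by simp)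
  have dE : DifferentiableAt ℝ (degOp f) X := cE.differentiableAt (by simp)
  have dEE : DifferentiableAt ℝ (degOp (degOp f)) X :=
    (contDiffAt_degOp cE one_add_one_eq_two.le).differentiableAt (by simp)
  have dquad := (dEE.add (dE.const_smul (3 : ℂ))).add (df.const_smul (2 : ℂ))
  rw [hbox, degOp_add (differentiableAt_lap hf) (dquad.const_smul _), degOp_const_smul dquad,
    degOp_add (dEE.add (dE.const_smul _)) (df.const_smul _), degOp_add dEE (dE.const_smul _),
    degOp_const_smul dE, degOp_const_smul df]

lemma degOp_tdeg (hf : ContDiffAt ℝ 2 f X) :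
    degOp (tdeg f) X = degOp f X + degOp (degOp f) X :=
  degOp_add (hf.differentiableAt (by simp))
    ((contDiffAt_degOp hf one_add_one_eq_two.le).differentiableAt (by simp))

lemma degOp_degOp_tdeg (hf : ContDiffAt ℝ 3 f X) :
    degOp (degOp (tdeg f)) X = degOp (degOp f) X + degOp (degOp (degOp f)) X := by
  have hdeg : degOp (tdeg f) =ᶠ[𝓝 X] tdeg (degOp f) := by
    filter_upwards [hf.eventually (by simp)] with Y hY
    exact degOp_tdeg (hY.of_le (by norm_num))
  rw [(degOp_eventuallyEq hdeg).eq_of_nhds,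
    degOp_tdeg (contDiffAt_degOp hf two_add_one_eq_three.le)]

lemma lap_tdeg (hf : ContDiffAt ℝ 3 f X) : lap (tdeg f) X = degOp (lap f) X + 3 * lap f X := by
  have hadd : lap (tdeg f) X = lap f X + lap (degOp f) X :=
    lap_add (hf.of_le (by norm_num)) (contDiffAt_degOp hf two_add_one_eq_three.le)
  rw [hadd, lap_degOp hf]
  ring

lemma boxTilde_conformalFactor_mul_tdeg (hf : ContDiffAt ℝ 3 f X) :
    boxTilde μ (conformalFactor μ * tdeg f) X =
      conformalFactor μ X * (degOp (boxTilde μ f) X + 3 * boxTilde μ f X) := by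
  have ct : ContDiffAt ℝ 2 (tdeg f) X :=
    (hf.of_le (by norm_num)).add (contDiffAt_degOp hf two_add_one_eq_three.le)
  rw [boxTilde_conformalFactor_mul μ ct, lap_tdeg hf, degOp_degOp_tdeg hf,
    degOp_tdeg (hf.of_le (by norm_num)), degOp_boxTilde μ hf, boxTilde, tdeg, Complex.ofReal_pow]
  ring

end Intertwining

theorem stmt4_general (μ : ℝ) {φ : (Fin 4 → ℝ) → ℂ} {X : Fin 4 → ℝ} (hφ : ContDiffAt ℝ 3 φ X)
    (hsol : boxTilde μ φ =ᶠ[𝓝 X] 0) :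
    boxTilde μ (fun Y ↦ (Real.sqrt (1 + μ ^ 2 * Nq Y) : ℂ) * tdeg φ Y) X = 0 := by
  have hdeg : degOp (boxTilde μ φ) X = 0 := by
    simp [degOp_eq_fderiv, hsol.fderiv_eq]
  have hbox := boxTilde_conformalFactor_mul_tdeg μ hφ
  rwa [hdeg, hsol.eq_of_nhds, Pi.zero_apply, mul_zero, add_zero, mul_zero] at hbox

/-- If `φ` is smooth on an open `U ⊆ ℝ⁴` and `□̃_μφ = 0` on `U`, then
`□̃_μ((1+μ²N(X))^{1/2}·d̃eg φ) = 0` on `U`. -/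
theorem stmt4 (μ : ℝ) (hμ : 0 < μ) (U : Set (Fin 4 → ℝ)) (hU : IsOpen U)
    (φ : (Fin 4 → ℝ) → ℂ) (hφ : ContDiffOn ℝ (⊤ : ℕ∞) φ U)
    (hsol : ∀ X ∈ U, boxTilde μ φ X = 0) :
    ∀ X ∈ U,
      boxTilde μ (fun Y => (Real.sqrt (1 + μ ^ 2 * Nq Y) : ℂ) * tdeg φ Y) X = 0 := by
  have three_le_infty : (3 : WithTop ℕ∞) ≤ (⊤ : ℕ∞) := WithTop.coe_le_coe.2 le_top
  exact fun X hX ↦ stmt4_general μ ((hφ.contDiffAt (hU.mem_nhds hX)).of_le three_le_infty)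
    (eventually_of_mem (hU.mem_nhds hX) hsol)
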